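/- arXiv:2312.15732 — 10 statements merged into one kernel-verified Lean document; each statement's English description precedes it below -/
import Mathlib

section
/- For every group Γ and group homomorphism ω: Γ × Γ → Γ, the map R(ω): K(ω) → K(ω) × K(ω) is well defined (i.e. both components of R(ω)(a) again lie in K(ω)) and is a group isomorphism. Its inverse sends a pair (a, a') ∈ K(ω) × K(ω) to the map b: {0,1}* → Γ with b(ε) = ω(a(ε), a'(ε)), b(0·u) = a(u) and b(1·u) = a'(u) for all u ∈ {0,1}*. -/
/-- `K(ω)`: the subgroup of the product group of `Γ`-valued functions on `{0,1}*`
(pointwise multiplication) consisting of the `a : {0,1}* → Γ` with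
`a u = ω (a (u·0), a (u·1))` for all `u`. -/
def Kgrp {Γ : Type*} [Group Γ] (ω : Γ × Γ →* Γ) : Subgroup (List Bool → Γ) where
  carrier := {a | ∀ u : List Bool, a u = ω (a (u ++ [false]), a (u ++ [true]))}
  mul_mem' := by
    intro a b ha hb u
    simp only [Pi.mul_apply]
    rw [ha u, hb u, ← map_mul, Prod.mk_mul_mk]
  one_mem' := by
    intro u
    simp only [Pi.one_apply]
    rw [show ((1 : Γ), (1 : Γ)) = (1 : Γ × Γ) from rfl, map_one]
  inv_mem' := by
    intro a ha u
    simp only [Pi.inv_apply]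
    rw [ha u, ← map_inv, Prod.inv_mk]

/-- The `i`-th component `Rᵢ(ω) : K(ω) → K(ω)` of `R(ω)`: prepend the letter `i`. -/
def Rcomp {Γ : Type*} [Group Γ] (ω : Γ × Γ →* Γ) (i : Bool) (a : Kgrp ω) : Kgrp ω :=
  ⟨fun u => (a : List Bool → Γ) (i :: u), fun u => a.2 (i :: u)⟩

/-- `R(ω) : K(ω) → K(ω) × K(ω)`, given by deleting a caret at the bottom:
`R(ω)(a) = (a₀, a₁)` with `aᵢ(u) = a(i·u)`. -/
def Rmap {Γ : Type*} [Group Γ] (ω : Γ × Γ →* Γ) (a : Kgrp ω) : Kgrp ω × Kgrp ω :=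
  (Rcomp ω false a, Rcomp ω true a)

/-! The condition defining `K(ω)` at a word `i·u` is the condition at `u` for the subtree function
`v ↦ a(i·v)`, since prepending and appending letters commute. So membership in `K(ω)` amounts to
membership of both subtree functions together with the single condition at `ε`, and that condition
determines the root value from the two subtrees. Hence a pair in `K(ω)` glues in exactly one way. -/

section JoinSubtrees

variable {α : Type*}

/-- The labelling of `{0,1}*` with value `x` at the root and with subtree labellings `f` below `0`
and `g` below `1`, where `false` and `true` encode the letters `0` and `1`. It is used to glue two
elements of `K(ω)`. -/
def joinSubtrees (x : α) (f g : List Bool → α) : List Bool → α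
  | [] => x
  | false :: u => f u
  | true :: u => g u

theorem joinSubtrees_root_subtrees (f : List Bool → α) :
    joinSubtrees (f []) (fun u => f (false :: u)) (fun u => f (true :: u)) = f := by
  funext u
  rcases u with _ | ⟨_ | _, u⟩ <;> rfl

end JoinSubtrees

section KgrpDecomposition

variable {Γ : Type*} [Group Γ] {ω : Γ × Γ →* Γ}

theorem mem_kgrp_iff_root_and_subtrees {f : List Bool → Γ} :
    f ∈ Kgrp ω ↔ f [] = ω (f [false], f [true]) ∧
      (fun u => f (false :: u)) ∈ Kgrp ω ∧ (fun u => f (true :: u)) ∈ Kgrp ω := by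
  constructor
  · intro hf
    exact ⟨hf [], fun u => hf (false :: u), fun u => hf (true :: u)⟩
  · rintro ⟨root, left, right⟩ (_ | ⟨_ | _, u⟩)
    · exact root
    · exact left u
    · exact right u

variable (ω) in
/-- The inverse of `R(ω)`: glue two elements of `K(ω)`, with the root value that the condition
at `ε` forces. -/
def rmapInv (p : Kgrp ω × Kgrp ω) : Kgrp ω :=
  ⟨joinSubtrees (ω (p.1.1 [], p.2.1 [])) p.1.1 p.2.1,
    mem_kgrp_iff_root_and_subtrees.2 ⟨rfl, p.1.2, p.2.2⟩⟩

theorem rmap_mul (a b : Kgrp ω) : Rmap ω (a * b) = Rmap ω a * Rmap ω b := rfl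

theorem leftInverse_rmapInv_rmap : Function.LeftInverse (rmapInv ω) (Rmap ω) := by
  intro a
  obtain ⟨root, -⟩ := mem_kgrp_iff_root_and_subtrees.1 a.2
  apply Subtype.ext
  calc joinSubtrees (ω (a.1 [false], a.1 [true])) (fun u => a.1 (false :: u))
        (fun u => a.1 (true :: u))
      = joinSubtrees (a.1 []) (fun u => a.1 (false :: u)) (fun u => a.1 (true :: u)) := by
        rw [root]
    _ = a.1 := joinSubtrees_root_subtrees a.1

theorem rightInverse_rmapInv_rmap : Function.RightInverse (rmapInv ω) (Rmap ω) := fun _ => rfl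

variable (ω) in
/-- The map `R(ω)` as an isomorphism of groups, with inverse `rmapInv ω`. -/
def rmapMulEquiv : Kgrp ω ≃* Kgrp ω × Kgrp ω where
  toFun := Rmap ω
  invFun := rmapInv ω
  left_inv := leftInverse_rmapInv_rmap
  right_inv := rightInverse_rmapInv_rmap
  map_mul' := rmap_mul

end KgrpDecomposition

/-- for every group homomorphism `ω : Γ × Γ → Γ`, the map
`R(ω) : K(ω) → K(ω) × K(ω)` is well defined (both components again lie in `K(ω)`)
and is a group isomorphism, whose inverse sends `(a, a')` to the map `b` with
`b ε = ω (a ε, a' ε)`, `b (0·u) = a u` and `b (1·u) = a' u`. -/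
theorem stmt0 {Γ : Type*} [Group Γ] (ω : Γ × Γ →* Γ) :
    (∀ a : Kgrp ω,
      (fun u => (a : List Bool → Γ) (false :: u)) ∈ Kgrp ω ∧
      (fun u => (a : List Bool → Γ) (true :: u)) ∈ Kgrp ω) ∧
    ∃ e : Kgrp ω ≃* Kgrp ω × Kgrp ω,
      (∀ a : Kgrp ω,
        ((e a).1 : List Bool → Γ) = (fun u => (a : List Bool → Γ) (false :: u)) ∧
        ((e a).2 : List Bool → Γ) = (fun u => (a : List Bool → Γ) (true :: u))) ∧
      (∀ p : Kgrp ω × Kgrp ω,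
        (e.symm p : List Bool → Γ) [] =
          ω ((p.1 : List Bool → Γ) [], (p.2 : List Bool → Γ) []) ∧
        ∀ u : List Bool,
          (e.symm p : List Bool → Γ) (false :: u) = (p.1 : List Bool → Γ) u ∧
          (e.symm p : List Bool → Γ) (true :: u) = (p.2 : List Bool → Γ) u) := by
  refine ⟨fun a => (mem_kgrp_iff_root_and_subtrees.1 a.2).2, rmapMulEquiv ω, ?_, ?_⟩
  · exact fun a => ⟨rfl, rfl⟩
  · exact fun p => ⟨rfl, fun u => ⟨rfl, rfl⟩⟩
end

section
/- Let Γ be a group and ω: Γ × Γ → Γ a group homomorphism. Suppose K' is a group, R': K' → K' × K' is a group isomorphism, and p: K' → Γ is a group homomorphism satisfying p(a) = ω(p(fst(R'(a))), p(snd(R'(a)))) for all a ∈ K'. Then there exists a unique group homomorphism ψ: K' → K(ω) such that ψ(a)(ε) = p(a) for all a ∈ K' and (ψ × ψ) ∘ R' = R(ω) ∘ ψ. -/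
/-!
Iterating `R : M → M × M` turns every `a : M` into a binary tree of elements of `M`, whose vertex
at the word `u` is reached from `a` by following the letters of `u`. Applying `p` vertexwise gives a
function `{0,1}* → Γ`, and the hypothesis on `p`, applied at the vertex `u`, is the equation
defining `K(ω)` at `u`. Conversely, intertwining `R` with `R(ω)` forces the value of `ψ a` at `u`
to be the value at `ε` of `ψ` of the vertex `u`.
-/

section Descend

variable {M : Type*} [MulOneClass M]

/-- The two components `M → M` of a homomorphism `R : M → M × M`, indexed by letters as in
`Rcomp`: `false` is the first component and `true` the second. -/
def branch (R : M →* M × M) : Bool → (M →* M)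
  | false => (MonoidHom.fst M M).comp R
  | true => (MonoidHom.snd M M).comp R

/-- The vertex at a word of the binary tree that iterating `R` grows from an element of `M`. The
first letter of the word is followed first. -/
def descend (R : M →* M × M) : List Bool → (M →* M)
  | [] => MonoidHom.id M
  | i :: u => (descend R u).comp (branch R i)

theorem descend_append_singleton (R : M →* M × M) (u : List Bool) (i : Bool) (a : M) :
    descend R (u ++ [i]) a = branch R i (descend R u a) := by
  induction u generalizing a with
  | nil => rfl
  | cons j _ ih => exact ih (branch R j a)

end Descend

namespace Kgrp

variable {Γ M : Type*} [Group Γ] [MulOneClass M] {ω : Γ × Γ →* Γ} {R : M →* M × M}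

theorem comp_descend_mem {p : M → Γ} (hp : ∀ a, p a = ω (p (R a).1, p (R a).2)) (a : M) :
    (fun u ↦ p (descend R u a)) ∈ Kgrp ω := by
  intro u
  simp only [descend_append_singleton]
  exact hp (descend R u a)

/-- The homomorphism `M → K(ω)` induced by `p : M → Γ`: it evaluates `p` along the tree that
iterating `R` grows from an element of `M`. -/
def lift (p : M →* Γ) (hp : ∀ a, p a = ω (p (R a).1, p (R a).2)) : M →* Kgrp ω :=
  (MonoidHom.pi fun u ↦ p.comp (descend R u)).codRestrict (Kgrp ω) (comp_descend_mem hp)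

theorem lift_apply (p : M →* Γ) (hp : ∀ a, p a = ω (p (R a).1, p (R a).2)) (a : M)
    (u : List Bool) : (lift p hp a : List Bool → Γ) u = p (descend R u a) :=
  rfl

theorem Rmap_lift (p : M →* Γ) (hp : ∀ a, p a = ω (p (R a).1, p (R a).2)) (a : M) :
    Rmap ω (lift p hp a) = (lift p hp (R a).1, lift p hp (R a).2) :=
  rfl

theorem apply_cons_of_Rmap_eq {φ : M → Kgrp ω}
    (hφ : ∀ a, Rmap ω (φ a) = (φ (R a).1, φ (R a).2)) (a : M) (i : Bool) (u : List Bool) :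
    (φ a : List Bool → Γ) (i :: u) = (φ (branch R i a) : List Bool → Γ) u := by
  have hcomp : Rcomp ω i (φ a) = φ (branch R i a) := by
    cases i
    · exact congrArg Prod.fst (hφ a)
    · exact congrArg Prod.snd (hφ a)
  rw [← hcomp]
  rfl

theorem apply_eq_descend_apply_nil_of_Rmap_eq {φ : M → Kgrp ω}
    (hφ : ∀ a, Rmap ω (φ a) = (φ (R a).1, φ (R a).2)) (a : M) (u : List Bool) :
    (φ a : List Bool → Γ) u = (φ (descend R u a) : List Bool → Γ) [] := by
  induction u generalizing a with
  | nil => rfl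
  | cons i u ih => exact (apply_cons_of_Rmap_eq hφ a i u).trans (ih (branch R i a))

theorem eq_lift {p : M →* Γ} (hp : ∀ a, p a = ω (p (R a).1, p (R a).2)) {φ : M →* Kgrp ω}
    (hnil : ∀ a, (φ a : List Bool → Γ) [] = p a)
    (hφ : ∀ a, Rmap ω (φ a) = (φ (R a).1, φ (R a).2)) : φ = lift p hp := by
  ext a u
  rw [apply_eq_descend_apply_nil_of_Rmap_eq hφ, hnil, lift_apply]

end Kgrp

theorem stmt1_general {Γ M : Type*} [Group Γ] [MulOneClass M] (ω : Γ × Γ →* Γ)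
    (R : M →* M × M) (p : M →* Γ) (hp : ∀ a : M, p a = ω (p (R a).1, p (R a).2)) :
    ∃! ψ : M →* Kgrp ω,
      (∀ a : M, (ψ a : List Bool → Γ) [] = p a) ∧
      (∀ a : M, Rmap ω (ψ a) = (ψ (R a).1, ψ (R a).2)) :=
  ⟨Kgrp.lift p hp, ⟨fun a ↦ Kgrp.lift_apply p hp a [], Kgrp.Rmap_lift p hp⟩,
    fun _ ⟨hnil, hRmap⟩ ↦ Kgrp.eq_lift hp hnil hRmap⟩

/-- universal property of `(K(ω), R(ω))`: for every group `K'`, group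
isomorphism `R' : K' ≃ K' × K'` and homomorphism `p : K' → Γ` with
`p a = ω (p (R' a).1, p (R' a).2)`, there is a unique group homomorphism
`ψ : K' → K(ω)` with `ψ(a)(ε) = p a` and `(ψ × ψ) ∘ R' = R(ω) ∘ ψ`. -/
theorem stmt1 {Γ K' : Type*} [Group Γ] [Group K'] (ω : Γ × Γ →* Γ)
    (R' : K' ≃* K' × K') (p : K' →* Γ)
    (hp : ∀ a : K', p a = ω (p (R' a).1, p (R' a).2)) :
    ∃! ψ : K' →* Kgrp ω,
      (∀ a : K', (ψ a : List Bool → Γ) [] = p a) ∧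
      (∀ a : K', Rmap ω (ψ a) = (ψ (R' a).1, ψ (R' a).2)) :=
  stmt1_general ω R'.toMonoidHom p hp
end

section
/- Let Γ be a group and ω: Γ × Γ → Γ a group homomorphism which is a bijection (a group isomorphism Γ × Γ → Γ). Then the evaluation map K(ω) → Γ, a ↦ a(ε), is a group isomorphism. -/
section Labelling

variable {α : Type*}

/-- `a` labels the vertices of the infinite binary tree so that, at every caret, the label of the
root of the caret is `ω` of the labels of its two leaves: the defining condition of `K(ω)`, for a
mere map of sets `ω`. -/
def IsCaretLabelling (ω : α × α → α) (a : List Bool → α) : Prop :=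
  ∀ u : List Bool, a u = ω (a (u ++ [false]), a (u ++ [true]))

/-- The labelling of the infinite binary tree with root label `x` obtained by splitting every label
with `s` into the labels of its two children. Folding from the left reads a word from the root
downwards, since children are formed by appending letters. -/
def splitLabelling (s : α → α × α) (x : α) : List Bool → α :=
  List.foldl (fun y i => bif i then (s y).2 else (s y).1) x

theorem splitLabelling_append_singleton (s : α → α × α) (x : α) (u : List Bool) (i : Bool) :
    splitLabelling s x (u ++ [i]) =
      bif i then (s (splitLabelling s x u)).2 else (s (splitLabelling s x u)).1 :=
  List.foldl_concat _ _ _ _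

theorem isCaretLabelling_splitLabelling {ω : α × α → α} {s : α → α × α}
    (hs : Function.RightInverse s ω) (x : α) : IsCaretLabelling ω (splitLabelling s x) := by
  intro u
  simp only [splitLabelling_append_singleton, cond_false, cond_true, Prod.mk.eta]
  exact (hs _).symm

theorem IsCaretLabelling.eq_of_apply_nil_eq {ω : α × α → α} (hω : Function.Injective ω)
    {a b : List Bool → α} (ha : IsCaretLabelling ω a) (hb : IsCaretLabelling ω b)
    (hab : a [] = b []) : a = b := by
  funext u
  induction u using List.reverseRecOn with
  | nil => exact hab
  | append_singleton u i ih =>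
    have children_eq : (a (u ++ [false]), a (u ++ [true])) = (b (u ++ [false]), b (u ++ [true])) :=
      hω <| by rw [← ha u, ← hb u, ih]
    cases i with
    | false => exact congrArg Prod.fst children_eq
    | true => exact congrArg Prod.snd children_eq

end Labelling

namespace Kgrp

variable {Γ : Type*} [Group Γ] {ω : Γ × Γ →* Γ}

theorem mem_iff {a : List Bool → Γ} : a ∈ Kgrp ω ↔ IsCaretLabelling ω a :=
  Iff.rfl

variable (ω) in
/-- Evaluation at the empty word, as a homomorphism `K(ω) → Γ`. -/
def evalNil : Kgrp ω →* Γ :=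
  (Pi.evalMonoidHom (fun _ : List Bool => Γ) []).comp (Kgrp ω).subtype

theorem evalNil_injective (hω : Function.Injective ω) : Function.Injective (evalNil ω) :=
  fun a b hab =>
    Subtype.ext <| (mem_iff.mp a.2).eq_of_apply_nil_eq hω (mem_iff.mp b.2) hab

theorem evalNil_surjective (hω : Function.Surjective ω) : Function.Surjective (evalNil ω) := by
  obtain ⟨s, hs⟩ := hω.hasRightInverse
  exact fun g => ⟨⟨splitLabelling s g, mem_iff.mpr (isCaretLabelling_splitLabelling hs g)⟩, rfl⟩

end Kgrp

/-- if `ω : Γ × Γ → Γ` is a bijective group homomorphism, then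
evaluation at the empty word is a group isomorphism `K(ω) ≃ Γ`. -/
theorem stmt2 {Γ : Type*} [Group Γ] (ω : Γ × Γ →* Γ) (hω : Function.Bijective ω) :
    ∃ e : Kgrp ω ≃* Γ, ∀ a : Kgrp ω, e a = (a : List Bool → Γ) [] := by
  have evalNil_bijective : Function.Bijective (Kgrp.evalNil ω) :=
    ⟨Kgrp.evalNil_injective hω.injective, Kgrp.evalNil_surjective hω.surjective⟩
  exact ⟨MulEquiv.ofBijective (Kgrp.evalNil ω) evalNil_bijective, fun _ => rfl⟩
end

section
/- Let Γ be a group, ω: Γ × Γ → Γ a group homomorphism, h ∈ Γ, and b: {0,1}* → Γ a map satisfying b(u) = h · ω(b(u·0), b(u·1)) for all u ∈ {0,1}*. Let ω' := ad(h) ∘ ω and let θ: K(ω) → K(ω') be given by θ(a)(u) := b(u) a(u) b(u)⁻¹. For i ∈ {0,1} define dⁱ: {0,1}* → Γ by dⁱ(u) := b(u) · b(i·u)⁻¹. Then d⁰ and d¹ belong to K(ω'), and for all a ∈ K(ω) and i ∈ {0,1} one has θ(Rᵢ(ω)(a)) = dⁱ · Rᵢ(ω')(θ(a)) · (dⁱ)⁻¹,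 where Rᵢ denotes the i-th component of R. -/
/-!
If `b` and `c` both satisfy `b(u) = h · ω(b(u·0), b(u·1))`, then `b c⁻¹` lies in `K(ad(h) ∘ ω)`.
The equation only involves appending letters, so it is inherited by the map `u ↦ b(v·u)` for any
fixed word `v`, and `c` can be taken to be this map. The intertwining relation then expresses that
`ad` is a homomorphism: `ad(b(u)) = ad(b(u) b(v·u)⁻¹) ∘ ad(b(v·u))`.
-/

/-- The equation `b(u) = h · ω(b(u·0), b(u·1))` for a map `b : {0,1}* → Γ`: the defining equation
of `K(ω)`, twisted by left multiplication by `h`. Conjugation by such a `b` maps `K(ω)` to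
`K(ad(h) ∘ ω)`. -/
def IsTwistedFixedPoint {Γ : Type*} [Group Γ] (ω : Γ × Γ →* Γ) (h : Γ) (b : List Bool → Γ) :
    Prop :=
  ∀ u : List Bool, b u = h * ω (b (u ++ [false]), b (u ++ [true]))

theorem conj_eq_conj_mul_inv_conj {G : Type*} [Group G] (x y g : G) :
    x * g * x⁻¹ = x * y⁻¹ * (y * g * y⁻¹) * (x * y⁻¹)⁻¹ := by
  group

namespace IsTwistedFixedPoint

variable {Γ : Type*} [Group Γ] {ω : Γ × Γ →* Γ} {h : Γ} {b c : List Bool → Γ}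

theorem comp_append (hb : IsTwistedFixedPoint ω h b) (v : List Bool) :
    IsTwistedFixedPoint ω h (fun u ↦ b (v ++ u)) := fun u ↦ by
  simpa only [List.append_assoc] using hb (v ++ u)

theorem mul_inv_mem_Kgrp (hb : IsTwistedFixedPoint ω h b) (hc : IsTwistedFixedPoint ω h c)
    {ω' : Γ × Γ →* Γ} (hω' : ∀ g₁ g₂ : Γ, ω' (g₁, g₂) = h * ω (g₁, g₂) * h⁻¹) :
    b * c⁻¹ ∈ Kgrp ω' := fun u ↦
  calc b u * (c u)⁻¹
    _ = h * ω (b (u ++ [false]), b (u ++ [true])) *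
          (h * ω (c (u ++ [false]), c (u ++ [true])))⁻¹ := by rw [← hb u, ← hc u]
    _ = h * ω ((b (u ++ [false]), b (u ++ [true])) *
          (c (u ++ [false]), c (u ++ [true]))⁻¹) * h⁻¹ := by
        rw [map_mul, map_inv, mul_inv_rev]
        simp only [mul_assoc]
    _ = ω' ((b * c⁻¹) (u ++ [false]), (b * c⁻¹) (u ++ [true])) := (hω' _ _).symm

end IsTwistedFixedPoint

theorem stmt6_general {Γ : Type*} [Group Γ] {ω : Γ × Γ →* Γ} {h : Γ} {b : List Bool → Γ}
    (hb : IsTwistedFixedPoint ω h b) {ω' : Γ × Γ →* Γ}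
    (hω' : ∀ g₁ g₂ : Γ, ω' (g₁, g₂) = h * ω (g₁, g₂) * h⁻¹)
    (v : List Bool) {d : List Bool → Γ} (hd : ∀ u : List Bool, d u = b u * (b (v ++ u))⁻¹) :
    d ∈ Kgrp ω' ∧
    ∀ (a : List Bool → Γ) (u : List Bool),
      b u * a (v ++ u) * (b u)⁻¹ =
        d u * (b (v ++ u) * a (v ++ u) * (b (v ++ u))⁻¹) * (d u)⁻¹ := by
  obtain rfl : d = b * (fun u ↦ b (v ++ u))⁻¹ := funext hd
  exact ⟨hb.mul_inv_mem_Kgrp (hb.comp_append v) hω', fun a u ↦ conj_eq_conj_mul_inv_conj _ _ _⟩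

/-- with `b`, `h`, `ω' = ad(h) ∘ ω`, `θ(a)(u) = b u · a u · (b u)⁻¹` as in
Statement 5, and `dⁱ(u) := b u · (b (i·u))⁻¹`, the maps `d⁰, d¹` belong to `K(ω')` and
`θ (Rᵢ(ω) a) = dⁱ · Rᵢ(ω') (θ a) · (dⁱ)⁻¹` for all `a ∈ K(ω)` and `i ∈ {0,1}`
(stated pointwise, `θ` and the conjugation being given by their defining formulas). -/
theorem stmt6 {Γ : Type*} [Group Γ] (ω : Γ × Γ →* Γ) (h : Γ) (b : List Bool → Γ)
    (hb : ∀ u : List Bool, b u = h * ω (b (u ++ [false]), b (u ++ [true])))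
    (ω' : Γ × Γ →* Γ)
    (hω' : ∀ g₁ g₂ : Γ, ω' (g₁, g₂) = h * ω (g₁, g₂) * h⁻¹)
    (d : Bool → List Bool → Γ)
    (hd : ∀ (i : Bool) (u : List Bool), d i u = b u * (b (i :: u))⁻¹) :
    (∀ i : Bool, d i ∈ Kgrp ω') ∧
    ∀ (a : Kgrp ω) (i : Bool) (u : List Bool),
      b u * (a : List Bool → Γ) (i :: u) * (b u)⁻¹ =
        d i u * (b (i :: u) * (a : List Bool → Γ) (i :: u) * (b (i :: u))⁻¹) *
          (d i u)⁻¹ :=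
  ⟨fun i ↦ (stmt6_general hb hω' [i] (hd i)).1,
    fun a i ↦ (stmt6_general hb hω' [i] (hd i)).2 a⟩
end

section
/- Let Γ be a group and ω: Γ × Γ → Γ a group homomorphism. Define S₀ := Γ, Sₙ₊₁ := the image of Sₙ × Sₙ under ω, and Γ_ω := ⋂ₙ Sₙ. Then every element a ∈ K(ω) takes all its values in Γ_ω: a(u) ∈ Γ_ω for all u ∈ {0,1}*. -/
/-- The decreasing family `S₀ = Γ`, `Sₙ₊₁ = ω (Sₙ × Sₙ)` of subgroups of `Γ`. -/
def Sfam {Γ : Type*} [Group Γ] (ω : Γ × Γ →* Γ) : ℕ → Subgroup Γ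
  | 0 => ⊤
  | n + 1 => ((Sfam ω n).prod (Sfam ω n)).map ω

/-- `Γ_ω := ⋂ₙ Sₙ`. -/
def GammaOmega {Γ : Type*} [Group Γ] (ω : Γ × Γ →* Γ) : Subgroup Γ :=
  ⨅ n : ℕ, Sfam ω n

section PostFixed

variable {Γ : Type*} [Group Γ] {ω : Γ × Γ →* Γ} {T : Set Γ}

theorem subset_Sfam_of_subset_image_prod (hT : T ⊆ ω '' (T ×ˢ T)) (n : ℕ) :
    T ⊆ Sfam ω n := by
  induction n with
  | zero => exact Set.subset_univ T
  | succ n ih => exact hT.trans (Set.image_mono (Set.prod_mono ih ih))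

theorem subset_GammaOmega_of_subset_image_prod (hT : T ⊆ ω '' (T ×ˢ T)) :
    T ⊆ GammaOmega ω :=
  fun _ hx => Subgroup.mem_iInf.2 fun n => subset_Sfam_of_subset_image_prod hT n hx

theorem Kgrp.range_subset_image_prod (a : Kgrp ω) :
    Set.range (a : List Bool → Γ) ⊆
      ω '' (Set.range (a : List Bool → Γ) ×ˢ Set.range (a : List Bool → Γ)) := by
  rintro _ ⟨u, rfl⟩
  exact ⟨_, ⟨Set.mem_range_self (u ++ [false]), Set.mem_range_self (u ++ [true])⟩, (a.2 u).symm⟩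

end PostFixed

/-- every element `a ∈ K(ω)` takes all its values in `Γ_ω`. -/
theorem stmt9 {Γ : Type*} [Group Γ] (ω : Γ × Γ →* Γ) :
    ∀ a : Kgrp ω, ∀ u : List Bool, (a : List Bool → Γ) u ∈ GammaOmega ω := by
  intro a u
  exact subset_GammaOmega_of_subset_image_prod (Kgrp.range_subset_image_prod a)
    (Set.mem_range_self u)
end

section
/- Let Γ be a group, α an automorphism of Γ, and ω_α: Γ × Γ → Γ the homomorphism (g, h) ↦ α(g). Then the map κ from the group of all functions Q₂ → Γ (with pointwise multiplication) to K(ω_α), defined by κ(f)(u) := α^{-|u|}(f(u00···)) for u ∈ {0,1}* (|u| the length of u), is a group isomorphism. Its inverse sends a ∈ K(ω_α) to the function x ↦ α^{|u|}(a(u)), where u is any word in {0,1}* with x = u00···; in particular this value does not depend on the choice of such u. -/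
/-- `ω_α : Γ × Γ → Γ`, `(g, h) ↦ α g`, for an automorphism `α` of `Γ`. -/
def omegaAut {Γ : Type*} [Group Γ] (α : MulAut Γ) : Γ × Γ →* Γ :=
  (MulEquiv.toMonoidHom α).comp (MonoidHom.fst Γ Γ)

/-- `Q₂`: the eventually-zero binary sequences. -/
def Q2 : Type := {x : ℕ → Bool // ∃ N : ℕ, ∀ n : ℕ, N ≤ n → x n = false}

/-- `u00⋯`: the binary sequence extending the finite word `u` by zeros. -/
def extZero (u : List Bool) : ℕ → Bool := fun n => u.getD n false

theorem extZero_mem (u : List Bool) : ∃ N : ℕ, ∀ n : ℕ, N ≤ n → extZero u n = false :=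
  ⟨u.length, fun _ hn => List.getD_eq_default u false hn⟩

/-
Multiplying out the twist, `b u = α ^ |u| (a u)`, turns the defining relation of `K(ω_α)` into
`b (u·0) = b u`. Such a `b` is exactly a function of `u00⋯`: two words with the same zero extension
become equal once enough zeros are appended to each. Hence `b` amounts to a function on `Q₂`.
-/

theorem extZero_append_replicate (u : List Bool) (n : ℕ) :
    extZero (u ++ List.replicate n false) = extZero u := by
  funext i
  rcases lt_or_ge i u.length with hi | hi
  · exact List.getD_append u _ false i hi
  · calc (u ++ List.replicate n false).getD i false
        = (List.replicate n false).getD (i - u.length) false :=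
          List.getD_append_right u _ false i hi
      _ = false := by grind
      _ = u.getD i false := (List.getD_eq_default u false hi).symm

theorem eq_of_extZero_eq_of_length_eq {u v : List Bool} (h : extZero u = extZero v)
    (hlen : u.length = v.length) : u = v := by
  refine List.ext_getElem hlen fun i hu hv => ?_
  calc u[i] = extZero u i := (List.getD_eq_getElem u false hu).symm
    _ = extZero v i := congrFun h i
    _ = v[i] := List.getD_eq_getElem v false hv

theorem append_replicate_eq_of_extZero_eq {u v : List Bool} (h : extZero u = extZero v) :
    u ++ List.replicate v.length false = v ++ List.replicate u.length false := by
  apply eq_of_extZero_eq_of_length_eq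
  · rw [extZero_append_replicate, extZero_append_replicate, h]
  · simp [add_comm]

theorem factorsThrough_extZero_iff {β : Sort*} {b : List Bool → β} :
    b.FactorsThrough extZero ↔ ∀ u, b (u ++ [false]) = b u := by
  refine ⟨fun hb u => hb (extZero_append_replicate u 1), fun hb u v huv => ?_⟩
  have append_zeros (w : List Bool) (n : ℕ) : b (w ++ List.replicate n false) = b w := by
    induction n with
    | zero => simp
    | succ n ih => rw [List.replicate_succ', ← List.append_assoc, hb, ih]
  rw [← append_zeros u v.length, append_replicate_eq_of_extZero_eq huv, append_zeros]

/-- The point `u00⋯` of `Q₂`, for a finite word `u`. -/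
def Q2.ofList (u : List Bool) : Q2 :=
  ⟨extZero u, extZero_mem u⟩

theorem Q2.ofList_surjective : Function.Surjective Q2.ofList := by
  rintro ⟨x, N, hN⟩
  refine ⟨(List.range N).map x, Subtype.ext (funext fun n => ?_)⟩
  rcases lt_or_ge n N with hn | hn
  · simp [ofList, extZero, hn]
  · simp [ofList, extZero, hn, hN n hn]

section Kappa

variable {Γ : Type*} [Group Γ] (α : MulAut Γ)

/-- The automorphism `a ↦ (u ↦ α ^ |u| (a u))` of the group of all functions `{0,1}* → Γ`; it
carries `K(ω_α)` onto the functions that depend on `u00⋯` only. -/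
def lengthTwist : (List Bool → Γ) ≃* (List Bool → Γ) :=
  MulEquiv.piCongrRight fun u => α ^ (u.length : ℤ)

theorem mem_Kgrp_omegaAut_iff {a : List Bool → Γ} :
    a ∈ Kgrp (omegaAut α) ↔ (lengthTwist α a).FactorsThrough extZero := by
  rw [factorsThrough_extZero_iff]
  refine forall_congr' fun u => ?_
  have twist_append : lengthTwist α a (u ++ [false]) =
      (α ^ (u.length : ℤ)) (α (a (u ++ [false]))) := by
    simp [lengthTwist, pow_succ]
  rw [twist_append]
  exact eq_comm.trans (α ^ (u.length : ℤ)).injective.eq_iff.symm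

theorem lengthTwist_surjInv_ofList {a : List Bool → Γ} (ha : a ∈ Kgrp (omegaAut α))
    (u : List Bool) :
    lengthTwist α a (Function.surjInv Q2.ofList_surjective (Q2.ofList u)) = lengthTwist α a u :=
  (mem_Kgrp_omegaAut_iff α).mp ha
    (congrArg Subtype.val (Function.surjInv_eq Q2.ofList_surjective (Q2.ofList u)))

/-- The isomorphism `κ`, obtained by pulling a function on `Q₂` back to words and undoing
`lengthTwist`. The inverse evaluates the twisted function at a chosen word representing `x`. -/
noncomputable def kappa : (Q2 → Γ) ≃* Kgrp (omegaAut α) where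
  toFun f := ⟨(lengthTwist α).symm (f ∘ Q2.ofList), by
    rw [mem_Kgrp_omegaAut_iff, MulEquiv.apply_symm_apply]
    exact fun _ _ h => congrArg f (Subtype.ext h)⟩
  invFun a := lengthTwist α a ∘ Function.surjInv Q2.ofList_surjective
  left_inv f := by
    funext x
    simp [Function.surjInv_eq]
  right_inv a := Subtype.ext <|
    (lengthTwist α).symm_apply_eq.mpr (funext (lengthTwist_surjInv_ofList α a.2))
  map_mul' f g := Subtype.ext (map_mul (lengthTwist α).symm (f ∘ Q2.ofList) (g ∘ Q2.ofList))

theorem kappa_apply (f : Q2 → Γ) (u : List Bool) :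
    (kappa α f : List Bool → Γ) u = (α ^ (-(u.length : ℤ))) (f (Q2.ofList u)) := by
  rw [zpow_neg]
  rfl

theorem kappa_symm_apply_ofList (a : Kgrp (omegaAut α)) (u : List Bool) :
    (kappa α).symm a (Q2.ofList u) = (α ^ (u.length : ℤ)) ((a : List Bool → Γ) u) :=
  lengthTwist_surjInv_ofList α a.2 u

end Kappa

/-- for an automorphism `α` of `Γ` and `ω_α (g, h) = α g`, the map
`κ : ∏_{Q₂} Γ → K(ω_α)`, `κ(f)(u) := α^{-|u|} (f (u00⋯))`, is a group isomorphism,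
whose inverse sends `a` to `x ↦ α^{|u|} (a u)` for any word `u` with `x = u00⋯`
(in particular the value is independent of the choice of such `u`). -/
theorem stmt11 {Γ : Type*} [Group Γ] (α : MulAut Γ) :
    ∃ e : (Q2 → Γ) ≃* Kgrp (omegaAut α),
      (∀ (f : Q2 → Γ) (u : List Bool),
        (e f : List Bool → Γ) u =
          (α ^ (-(u.length : ℤ))) (f ⟨extZero u, extZero_mem u⟩)) ∧
      (∀ (a : Kgrp (omegaAut α)) (x : Q2) (u : List Bool),
        x.1 = extZero u →
          e.symm a x = (α ^ (u.length : ℤ)) ((a : List Bool → Γ) u)) := by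
  refine ⟨kappa α, kappa_apply α, fun a x u hx => ?_⟩
  obtain rfl : x = Q2.ofList u := Subtype.ext hx
  exact kappa_symm_apply_ofList α a u
end

section
/- Let Γ be a group, α an automorphism of Γ, ω_α: Γ × Γ → Γ the homomorphism (g, h) ↦ α(g), and a ∈ K(ω_α). Define supp(a) := {x ∈ C | for every m ∈ ℕ there exists w ∈ {0,1}* with a((x₀x₁···xₘ) ++ w) ≠ e}, where C = (ℕ → {0,1}) is the Cantor space with the product topology, and define S := {x ∈ Q₂ | α^{|u|}(a(u)) ≠ e for some (equivalently, any) word u with x = u00···}. Then S ⊆ supp(a) and supp(a) is contained in the topological closure of S in C; i.e. S is dense in supp(a). -/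
/-!
The support of `a` depends only on the language `L = {u | a u ≠ e}`: it consists of the sequences
all of whose finite prefixes extend to words of `L`. Choosing such an extension of each prefix of
`x` and padding it with zeros gives points of `{u00⋯ | u ∈ L}` converging to `x`. Conversely,
`a u = α (a (u·0))` makes `L` stable under appending zeros, so every prefix of `u00⋯` with `u ∈ L`
extends to a word `u0⋯0` of `L`. As `α` is injective, the twist `α^{|u|}` does not affect
nontriviality.
-/

section Words

open Filter Topology

variable {A : Type*} (z : A)

/-- The infinite word `uzz⋯`; `extZero` is the case `z = false`. -/
def extConst (u : List A) : ℕ → A := fun n => u.getD n z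

/-- The sequences all of whose finite prefixes extend to words of `L`, so that `supp(a)` is
`prefixLimit {u | a u ≠ e}`. As in the definition of `supp(a)`, the prefixes are `x₀⋯xₘ`, hence
nonempty. -/
def prefixLimit (L : Set (List A)) : Set (ℕ → A) :=
  {x | ∀ m : ℕ, ∃ w : List A, (List.range (m + 1)).map x ++ w ∈ L}

theorem map_range_extConst_isPrefix (u : List A) (n : ℕ) :
    (List.range n).map (extConst z u) <+: u ++ List.replicate n z := by
  rw [List.prefix_iff_getElem]
  refine ⟨by simp, fun i hi => ?_⟩
  simp only [List.getElem_map, List.getElem_range, extConst, List.getElem_append,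
    List.getElem_replicate]
  split_ifs with hiu
  · exact List.getD_eq_getElem u z hiu
  · exact List.getD_eq_default u z (not_lt.mp hiu)

theorem extConst_map_range_append_apply (x : ℕ → A) (w : List A) {i n : ℕ} (hi : i < n) :
    extConst z ((List.range n).map x ++ w) i = x i := by
  have hi' : i < ((List.range n).map x).length := by simpa using hi
  rw [extConst, List.getD_append _ _ _ _ hi', List.getD_eq_getElem _ _ hi', List.getElem_map,
    List.getElem_range]

variable {z} {L : Set (List A)}

theorem append_replicate_mem (hL : ∀ u ∈ L, u ++ [z] ∈ L) {u : List A} (hu : u ∈ L) (n : ℕ) :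
    u ++ List.replicate n z ∈ L := by
  induction n with
  | zero => simpa using hu
  | succ n ih =>
    rw [List.replicate_succ', ← List.append_assoc]
    exact hL _ ih

theorem image_extConst_subset_prefixLimit (hL : ∀ u ∈ L, u ++ [z] ∈ L) :
    extConst z '' L ⊆ prefixLimit L := by
  rintro _ ⟨u, hu, rfl⟩ m
  obtain ⟨w, hw⟩ := map_range_extConst_isPrefix z u (m + 1)
  exact ⟨w, hw ▸ append_replicate_mem hL hu (m + 1)⟩

variable (z L) in
theorem prefixLimit_subset_closure_image_extConst [TopologicalSpace A] :
    prefixLimit L ⊆ closure (extConst z '' L) := by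
  intro x hx
  choose w hw using hx
  have tendsto_x :
      Tendsto (fun m => extConst z ((List.range (m + 1)).map x ++ w m)) atTop (𝓝 x) :=
    tendsto_pi_nhds.mpr fun i => tendsto_atTop_of_eventually_const (i₀ := i) fun m hm =>
      extConst_map_range_append_apply z x (w m) (Nat.lt_succ_of_le hm)
  exact mem_closure_of_tendsto tendsto_x (.of_forall fun m => Set.mem_image_of_mem _ (hw m))

end Words

section Kgrp

open Function

theorem mulAut_coe_pow {M : Type*} [Mul M] (α : MulAut M) (n : ℕ) : ⇑(α ^ n) = α^[n] :=
  hom_coe_pow _ rfl (fun _ _ => rfl) α n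

theorem setOf_extZero_iterate_ne_one {M : Type*} [MulOneClass M] {α : M →* M} (hα : Injective α)
    (a : List Bool → M) :
    {x | ∃ u, x = extZero u ∧ α^[u.length] (a u) ≠ 1} = extConst false '' mulSupport a := by
  ext x
  refine exists_congr fun u => ?_
  rw [(hα.iterate u.length).ne_iff' (iterate_map_one α u.length), eq_comm, and_comm]
  rfl

variable {Γ : Type*} [Group Γ] {α : Γ →* Γ}

theorem append_false_mem_mulSupport (a : Kgrp (α.comp (MonoidHom.fst Γ Γ))) :
    ∀ u ∈ mulSupport (a : List Bool → Γ), u ++ [false] ∈ mulSupport (a : List Bool → Γ) := by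
  intro u hu h_one
  have h_apply : a.1 u = α (a.1 (u ++ [false])) := a.2 u
  exact hu (by rw [h_apply, h_one, map_one])

theorem stmt12_general (hα : Injective α) (a : Kgrp (α.comp (MonoidHom.fst Γ Γ))) :
    {x | ∃ u, x = extZero u ∧ α^[u.length] ((a : List Bool → Γ) u) ≠ 1} ⊆
        prefixLimit (mulSupport (a : List Bool → Γ)) ∧
      prefixLimit (mulSupport (a : List Bool → Γ)) ⊆
        closure {x | ∃ u, x = extZero u ∧ α^[u.length] ((a : List Bool → Γ) u) ≠ 1} := by
  rw [setOf_extZero_iterate_ne_one hα]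
  exact ⟨image_extConst_subset_prefixLimit (append_false_mem_mulSupport a),
    prefixLimit_subset_closure_image_extConst false _⟩

end Kgrp

/-- for `a ∈ K(ω_α)`, the set
`S = {x ∈ Q₂ | α^{|u|}(a u) ≠ e for some u with x = u00⋯}` is contained in
`supp(a) = {x ∈ C | ∀ m, ∃ w, a ((x₀⋯xₘ) ++ w) ≠ e}`, and `supp(a)` is contained in
the closure of `S` in the Cantor space `C = ℕ → Bool`; i.e. `S` is dense in `supp(a)`. -/
theorem stmt12 {Γ : Type*} [Group Γ] (α : MulAut Γ) (a : Kgrp (omegaAut α)) :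
    {x : ℕ → Bool | ∃ u : List Bool, x = extZero u ∧
        (α ^ (u.length : ℤ)) ((a : List Bool → Γ) u) ≠ 1}
      ⊆ {x : ℕ → Bool | ∀ m : ℕ, ∃ w : List Bool,
          (a : List Bool → Γ) (((List.range (m + 1)).map x) ++ w) ≠ 1} ∧
    {x : ℕ → Bool | ∀ m : ℕ, ∃ w : List Bool,
        (a : List Bool → Γ) (((List.range (m + 1)).map x) ++ w) ≠ 1}
      ⊆ closure {x : ℕ → Bool | ∃ u : List Bool, x = extZero u ∧
          (α ^ (u.length : ℤ)) ((a : List Bool → Γ) u) ≠ 1} := by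
  simp only [zpow_natCast, mulAut_coe_pow]
  exact stmt12_general α.injective a
end

section
/- Let Γ be a group, α: Γ → Γ an endomorphism, ω_α: Γ × Γ → Γ the homomorphism (g, h) ↦ α(g), and ω_{lim α}: lim Γ × lim Γ → lim Γ the homomorphism (g, h) ↦ (lim α)(g). Then the map θ: K(ω_{lim α}) → K(ω_α) defined by θ(a)(u) := (a(u))₀ (the 0-th coordinate of a(u) ∈ lim Γ) is a well-defined group isomorphism, and it satisfies (θ × θ) ∘ R(ω_{lim α}) = R(ω_α) ∘ θ. -/
/-- `lim Γ`: the inverse limit of `Γ ←α– Γ ←α– Γ ← ⋯`, as the subgroup of `∏_ℕ Γ`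
of sequences `g` with `g n = α (g (n+1))` for all `n`. -/
def limGrp {Γ : Type*} [Group Γ] (α : Γ →* Γ) : Subgroup (ℕ → Γ) where
  carrier := {g | ∀ n : ℕ, g n = α (g (n + 1))}
  mul_mem' := by
    intro a b ha hb n
    simp only [Pi.mul_apply]
    rw [ha n, hb n, ← map_mul]
  one_mem' := by
    intro n
    simp only [Pi.one_apply, map_one]
  inv_mem' := by
    intro a ha n
    simp only [Pi.inv_apply]
    rw [ha n, ← map_inv]

/-- `lim α : lim Γ → lim Γ`, `((lim α) g) n = α (g n)`, as a group homomorphism. -/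
def limAlpha {Γ : Type*} [Group Γ] (α : Γ →* Γ) : limGrp α →* limGrp α where
  toFun g := ⟨fun n => α ((g : ℕ → Γ) n), fun n => congrArg α (g.2 n)⟩
  map_one' := by
    apply Subtype.ext
    funext n
    simp
  map_mul' := by
    intro a b
    apply Subtype.ext
    funext n
    simp

/-- For an endomorphism `φ` of `G`, the homomorphism `G × G → G`, `(g, h) ↦ φ g`. -/
def omegaFst {G : Type*} [Group G] (φ : G →* G) : G × G →* G :=
  φ.comp (MonoidHom.fst G G)

/-! Since `g n = α (g (n + 1))` in `lim Γ`, the automorphism `lim α` is inverse to the shift. Hence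
`a u = (lim α) (a (u·0))` says that `(a u) (n + 1) = (a (u·0)) n`, and so `(a u) n = (a (u·0ⁿ)) 0`:
an element of `K(ω_{lim α})` is recovered from its `0`-th coordinates by reading them along the rays
`u, u·0, u·00, …`. -/

namespace limGrp

variable {Γ : Type*} [Group Γ] (α : Γ →* Γ)

/-- The projection of `lim Γ` to its `n`-th coordinate, `g ↦ g n`. For `n = 0` it induces `θ`. -/
def eval (n : ℕ) : limGrp α →* Γ :=
  (Pi.evalMonoidHom (fun _ : ℕ => Γ) n).comp (limGrp α).subtype

theorem eval_omegaFst_limAlpha (n : ℕ) (p : limGrp α × limGrp α) :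
    eval α n (omegaFst (limAlpha α) p) = omegaFst α (p.map (eval α n) (eval α n)) :=
  rfl

theorem eval_succ_limAlpha (n : ℕ) (g : limGrp α) :
    eval α (n + 1) (limAlpha α g) = eval α n g :=
  (g.2 n).symm

end limGrp

namespace Kgrp

section Map

variable {G H : Type*} [Group G] [Group H] {ω : G × G →* G} {ω' : H × H →* H}

/-- Functoriality of `K`: a homomorphism `f : G → H` with `f ∘ ω = ω' ∘ (f × f)` acts on `K(ω)`
by post-composition. -/
def map (f : G →* H) (hf : ∀ p : G × G, f (ω p) = ω' (p.map f f)) : Kgrp ω →* Kgrp ω' :=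
  ((f.compLeft (List Bool)).comp (Kgrp ω).subtype).codRestrict (Kgrp ω') fun a u =>
    (congrArg f (a.2 u)).trans (hf _)

theorem Rmap_map (f : G →* H) (hf : ∀ p : G × G, f (ω p) = ω' (p.map f f)) (a : Kgrp ω) :
    Rmap ω' (map f hf a) = (Rmap ω a).map (map f hf) (map f hf) :=
  rfl

end Map

section OmegaFst

variable {Γ : Type*} [Group Γ] {α : Γ →* Γ}

theorem apply_eq_apply_append_false (a : Kgrp (omegaFst α)) (u : List Bool) :
    a.1 u = α (a.1 (u ++ [false])) :=
  a.2 u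

theorem eval_eq_eval_zero_append_replicate (a : Kgrp (omegaFst (limAlpha α))) (n : ℕ)
    (u : List Bool) :
    limGrp.eval α n (a.1 u) = limGrp.eval α 0 (a.1 (u ++ List.replicate n false)) := by
  induction n generalizing u with
  | zero => simp only [List.replicate_zero, List.append_nil]
  | succ n ih =>
    calc limGrp.eval α (n + 1) (a.1 u)
      _ = limGrp.eval α n (a.1 (u ++ [false])) := by
        rw [apply_eq_apply_append_false a u, limGrp.eval_succ_limAlpha]
      _ = limGrp.eval α 0 (a.1 (u ++ List.replicate (n + 1) false)) := by
        rw [ih, List.append_assoc, List.singleton_append, List.replicate_succ]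

/-- The sequence `b u, b (u·0), b (u·00), …` of values of `b ∈ K(ω_α)` along a ray, as an element of
`lim Γ`; the inverse of `θ` sends `b` to `u ↦ alongRay b u`. -/
def alongRay (b : Kgrp (omegaFst α)) (u : List Bool) : limGrp α :=
  ⟨fun n => b.1 (u ++ List.replicate n false), fun n => by
    beta_reduce
    rw [apply_eq_apply_append_false b, List.append_assoc, ← List.replicate_succ']⟩

theorem alongRay_mem_Kgrp (b : Kgrp (omegaFst α)) :
    alongRay b ∈ Kgrp (omegaFst (limAlpha α)) := by
  intro u
  refine Subtype.ext (funext fun n => ?_)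
  calc b.1 (u ++ List.replicate n false)
    _ = α (b.1 (u ++ List.replicate (n + 1) false)) := (alongRay b u).2 n
    _ = α (b.1 (u ++ [false] ++ List.replicate n false)) := by
      rw [List.append_assoc, List.singleton_append, List.replicate_succ]

variable (α) in
/-- The isomorphism `θ : K(ω_{lim α}) ≃ K(ω_α)`, `θ(a)(u) = (a u)₀`. -/
def evalZeroEquiv : Kgrp (omegaFst (limAlpha α)) ≃* Kgrp (omegaFst α) where
  __ := map (limGrp.eval α 0) (limGrp.eval_omegaFst_limAlpha α 0)
  invFun b := ⟨alongRay b, alongRay_mem_Kgrp b⟩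
  left_inv a := Subtype.ext <| funext fun u => Subtype.ext <| funext fun n =>
    (eval_eq_eval_zero_append_replicate a n u).symm
  right_inv b := Subtype.ext <| funext fun u => congrArg b.1 (List.append_nil u)

end OmegaFst

end Kgrp

/-- the map `θ : K(ω_{lim α}) → K(ω_α)`, `θ(a)(u) := (a u)₀`, is a
well-defined group isomorphism satisfying `(θ × θ) ∘ R(ω_{lim α}) = R(ω_α) ∘ θ`. -/
theorem stmt17 {Γ : Type*} [Group Γ] (α : Γ →* Γ) :
    (∀ a : Kgrp (omegaFst (limAlpha α)),
      (fun u : List Bool => ((a : List Bool → limGrp α) u : ℕ → Γ) 0) ∈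
        Kgrp (omegaFst α)) ∧
    ∃ θ : Kgrp (omegaFst (limAlpha α)) ≃* Kgrp (omegaFst α),
      (∀ (a : Kgrp (omegaFst (limAlpha α))) (u : List Bool),
        (θ a : List Bool → Γ) u = ((a : List Bool → limGrp α) u : ℕ → Γ) 0) ∧
      (∀ a : Kgrp (omegaFst (limAlpha α)),
        Rmap (omegaFst α) (θ a) =
          (θ (Rmap (omegaFst (limAlpha α)) a).1,
           θ (Rmap (omegaFst (limAlpha α)) a).2)) :=
  ⟨fun a => (Kgrp.evalZeroEquiv α a).2, Kgrp.evalZeroEquiv α, fun _ _ => rfl,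
    Kgrp.Rmap_map (limGrp.eval α 0) (limGrp.eval_omegaFst_limAlpha α 0)⟩
end

section
/- Let Γ be a group, α: Γ → Γ an endomorphism, ω_α: Γ × Γ → Γ the homomorphism (g, h) ↦ α(g), and ω_{lim α}: lim Γ × lim Γ → lim Γ the homomorphism (g, h) ↦ (lim α)(g). For each a ∈ K(ω_α), the map â: {0,1}* → ∏_ℕ Γ defined by â(u)ₙ := a(u·0ⁿ) (the word u followed by n zeros) takes values in lim Γ, belongs to K(ω_{lim α}), and satisfies (â(u))₀ = a(u) for all u ∈ {0,1}*. -/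
/-!
The inverse of `lim α` is the left shift of sequences, and `â (u·0)` is the left shift of `â u`;
hence `â u = (lim α) (â (u·0))`.
-/

section InverseLimit

variable {Γ : Type*} [Group Γ] {α : Γ →* Γ}

theorem mem_limGrp {g : ℕ → Γ} : g ∈ limGrp α ↔ ∀ n, g n = α (g (n + 1)) :=
  Iff.rfl

theorem limAlpha_apply (g : limGrp α) (n : ℕ) :
    (limAlpha α g : ℕ → Γ) n = α ((g : ℕ → Γ) n) :=
  rfl

theorem limAlpha_eq_iff {g h : limGrp α} :
    limAlpha α h = g ↔ ∀ n, (h : ℕ → Γ) n = (g : ℕ → Γ) (n + 1) := by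
  constructor
  · rintro rfl n
    rw [limAlpha_apply]
    exact mem_limGrp.1 h.2 n
  · intro hshift
    ext n
    rw [limAlpha_apply, hshift]
    exact (mem_limGrp.1 g.2 n).symm

end InverseLimit

theorem mem_Kgrp_omegaFst {G : Type*} [Group G] {φ : G →* G} {a : List Bool → G} :
    a ∈ Kgrp (omegaFst φ) ↔ ∀ u, a u = φ (a (u ++ [false])) :=
  Iff.rfl

section LimLift

variable {Γ : Type*} [Group Γ] {α : Γ →* Γ} (a : Kgrp (omegaFst α))

theorem append_replicate_false_mem_limGrp (u : List Bool) :
    (fun n : ℕ => (a : List Bool → Γ) (u ++ List.replicate n false)) ∈ limGrp α := by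
  refine mem_limGrp.2 fun n => ?_
  rw [List.replicate_succ', ← List.append_assoc]
  exact mem_Kgrp_omegaFst.1 a.2 _

/-- The map `â : {0,1}* → lim Γ`, `â u = (n ↦ a (u·0ⁿ))`, which lifts `a ∈ K(ω_α)` along the
projection `lim Γ → Γ`, `g ↦ g 0`. The letter `0` is encoded as `false`. -/
def limLift (u : List Bool) : limGrp α :=
  ⟨fun n => (a : List Bool → Γ) (u ++ List.replicate n false),
    append_replicate_false_mem_limGrp a u⟩

theorem limLift_apply (u : List Bool) (n : ℕ) :
    (limLift a u : ℕ → Γ) n = (a : List Bool → Γ) (u ++ List.replicate n false) :=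
  rfl

theorem limLift_apply_zero (u : List Bool) :
    (limLift a u : ℕ → Γ) 0 = (a : List Bool → Γ) u := by
  rw [limLift_apply, List.replicate_zero, List.append_nil]

theorem limLift_append_false_apply (u : List Bool) (n : ℕ) :
    (limLift a (u ++ [false]) : ℕ → Γ) n = (limLift a u : ℕ → Γ) (n + 1) := by
  rw [limLift_apply, limLift_apply, List.append_assoc, List.singleton_append,
    List.replicate_succ]

theorem limLift_mem_Kgrp : limLift a ∈ Kgrp (omegaFst (limAlpha α)) :=
  mem_Kgrp_omegaFst.2 fun u => (limAlpha_eq_iff.2 (limLift_append_false_apply a u)).symm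

theorem eq_limLift {b : List Bool → limGrp α}
    (hb : ∀ (u : List Bool) (n : ℕ),
      (b u : ℕ → Γ) n = (a : List Bool → Γ) (u ++ List.replicate n false)) :
    b = limLift a :=
  funext fun u => Subtype.ext (funext (hb u))

end LimLift

/-- for each `a ∈ K(ω_α)`, the map `â : u ↦ (n ↦ a (u·0ⁿ))` takes
values in `lim Γ`, belongs to `K(ω_{lim α})`, and satisfies `(â u)₀ = a u`. -/
theorem stmt18 {Γ : Type*} [Group Γ] (α : Γ →* Γ) (a : Kgrp (omegaFst α)) :
    (∀ u : List Bool,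
      (fun n : ℕ => (a : List Bool → Γ) (u ++ List.replicate n false)) ∈ limGrp α) ∧
    (∀ b : List Bool → limGrp α,
      (∀ (u : List Bool) (n : ℕ),
        ((b u : ℕ → Γ) n = (a : List Bool → Γ) (u ++ List.replicate n false))) →
      b ∈ Kgrp (omegaFst (limAlpha α)) ∧
        ∀ u : List Bool, (b u : ℕ → Γ) 0 = (a : List Bool → Γ) u) := by
  refine ⟨append_replicate_false_mem_limGrp a, fun b hb => ?_⟩
  obtain rfl : b = limLift a := eq_limLift a hb
  exact ⟨limLift_mem_Kgrp a, limLift_apply_zero a⟩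
end

section
/- Let Γ be a group, α: Γ → Γ an endomorphism, and ω_{lim α}: lim Γ × lim Γ → lim Γ the homomorphism (g, h) ↦ (lim α)(g). If a ∈ K(ω_{lim α}) satisfies (a(u))₀ = e for all u ∈ {0,1}* (e the identity of Γ), then a is the identity element of K(ω_{lim α}); that is, (a(u))ₙ = e for all u ∈ {0,1}* and all n ∈ ℕ. -/
/-! Since `lim α` is invertible with inverse the left shift, the relation `a u = (lim α) (a (u·0))`
says that appending the letter `0` shifts: `(a (u·0))ₙ = (a u)ₙ₊₁`. Hence `(a u)ₙ = (a (u·0ⁿ))₀`,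
and `a` is determined by the zeroth coordinates of its values. -/

theorem Kgrp_omegaFst_apply_eq_iterate {G : Type*} [Group G] {φ : G →* G}
    (a : Kgrp (omegaFst φ)) (u : List Bool) (n : ℕ) :
    (a : List Bool → G) u = φ^[n] ((a : List Bool → G) (u ++ List.replicate n false)) := by
  induction n with
  | zero => rw [List.replicate_zero, List.append_nil, Function.iterate_zero_apply]
  | succ n ih =>
    have append_false (v : List Bool) :
        (a : List Bool → G) v = φ ((a : List Bool → G) (v ++ [false])) := a.2 v
    rw [ih, append_false, Function.iterate_succ_apply, List.replicate_succ', List.append_assoc]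

section InverseLimit

variable {Γ : Type*} [Group Γ] {α : Γ →* Γ}

theorem limAlpha_apply_succ (g : limGrp α) (n : ℕ) :
    (limAlpha α g : ℕ → Γ) (n + 1) = (g : ℕ → Γ) n :=
  (g.2 n).symm

theorem limAlpha_iterate_apply_add (g : limGrp α) (m n : ℕ) :
    ((limAlpha α)^[n] g : ℕ → Γ) (m + n) = (g : ℕ → Γ) m := by
  induction n with
  | zero => rfl
  | succ n ih => rw [Function.iterate_succ_apply', ← Nat.add_assoc, limAlpha_apply_succ, ih]

theorem Kgrp_limAlpha_apply_add (a : Kgrp (omegaFst (limAlpha α))) (u : List Bool) (m n : ℕ) :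
    ((a : List Bool → limGrp α) u : ℕ → Γ) (m + n) =
      ((a : List Bool → limGrp α) (u ++ List.replicate n false) : ℕ → Γ) m := by
  rw [Kgrp_omegaFst_apply_eq_iterate a u n, limAlpha_iterate_apply_add]

theorem Kgrp_limAlpha_ext_zero {a b : Kgrp (omegaFst (limAlpha α))}
    (h : ∀ u : List Bool, ((a : List Bool → limGrp α) u : ℕ → Γ) 0 =
      ((b : List Bool → limGrp α) u : ℕ → Γ) 0) :
    a = b := by
  ext u n
  rw [← Nat.zero_add n, Kgrp_limAlpha_apply_add, Kgrp_limAlpha_apply_add, h]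

end InverseLimit

/-- if `a ∈ K(ω_{lim α})` satisfies `(a u)₀ = e` for all words `u`,
then `a` is the identity of `K(ω_{lim α})`: `(a u)ₙ = e` for all `u`, `n`. -/
theorem stmt19 {Γ : Type*} [Group Γ] (α : Γ →* Γ)
    (a : Kgrp (omegaFst (limAlpha α)))
    (ha : ∀ u : List Bool, ((a : List Bool → limGrp α) u : ℕ → Γ) 0 = 1) :
    a = 1 ∧ ∀ (u : List Bool) (n : ℕ), ((a : List Bool → limGrp α) u : ℕ → Γ) n = 1 := by
  have a_eq_one : a = 1 := Kgrp_limAlpha_ext_zero ha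
  refine ⟨a_eq_one, fun u n => ?_⟩
  rw [a_eq_one]
  rfl
end
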